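/- arXiv:1401.6542 — 2 statements merged into one kernel-verified Lean document; each statement's English description precedes it below -/
import Mathlib

section
/- Let m > 2 be a real number and C₀ > 0. Let (X, d) be a proper metric space equipped with a Borel measure μ such that μ(B(y, r)) ≤ C₀·r^m for every y ∈ X and every radius 0 < r ≤ 1. Let Z ⊆ X be a closed subset whose (m−2)-dimensional Hausdorff measure vanishes, 𝓗^{m−2}(Z) = 0. Let f : X → ℝ be a measurable function with 0 ≤ f ≤ 1 on X and ∫_X f dμ ≤ 1. Then for every point x ∈ X and all η > 0, δ > 0, there exist a real number δ₁ with 0 < δ₁ ≤ δ and a Lipschitz function β : X → [0, 1] such that: (i) β vanishes outside B(x, 1/δ₁) \ Z_{δ₁}; (ii) β ≡ 1 on B(x, 1/δ) \ Z_{δ}; and (iii) ∫_X f · (Lip β)² dμ ≤ η. -/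
open MeasureTheory Metric NNReal

/-- The pointwise Lipschitz constant `Lip β(z) = limsup_{w → z} |β(w) − β(z)| / d(w, z)`. -/
noncomputable def pointwiseLip {X : Type*} [MetricSpace X] (β : X → ℝ) (z : X) : ℝ :=
  Filter.limsup (fun w => |β w - β z| / dist w z) (nhdsWithin z {z}ᶜ)

lemma clamp_lip (a b : ℝ) : |max 0 (min 1 a) - max 0 (min 1 b)| ≤ |a - b| := by
  refine (abs_max_sub_max_le_max 0 _ 0 _).trans ?_
  simp only [sub_self, abs_zero]
  refine max_le (abs_nonneg _) ((abs_min_sub_min_le_max 1 _ 1 _).trans ?_)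
  simp

lemma pointwiseLip_bound {X : Type*} [MetricSpace X] (β : X → ℝ) (y : X) (c : ℝ) (hc : 0 ≤ c)
    (h : ∀ᶠ w in nhds y, |β w - β y| ≤ c * dist w y) :
    0 ≤ pointwiseLip β y ∧ pointwiseLip β y ≤ c := by
  unfold pointwiseLip
  have h2 : ∀ᶠ w in nhdsWithin y {y}ᶜ, |β w - β y| / dist w y ≤ c := by
    filter_upwards [h.filter_mono nhdsWithin_le_nhds, self_mem_nhdsWithin] with w hw hwy
    have : 0 < dist w y := dist_pos.2 hwy
    rwa [div_le_iff₀ this]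
  rcases Filter.eq_or_neBot (nhdsWithin y {y}ᶜ) with hb | hb
  · rw [hb]
    simp [Filter.limsup, Filter.limsSup, hc]
  · have h3 : ∀ᶠ w in nhdsWithin y {y}ᶜ, 0 ≤ |β w - β y| / dist w y :=
      Filter.Eventually.of_forall fun w => by positivity
    have hbd : Filter.IsBoundedUnder (· ≤ ·) (nhdsWithin y {y}ᶜ)
      (fun w => |β w - β y| / dist w y) := ⟨c, by simpa using h2⟩
    have hbd' : Filter.IsBoundedUnder (· ≥ ·) (nhdsWithin y {y}ᶜ)
      (fun w => |β w - β y| / dist w y) := ⟨0, by simpa using h3⟩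
    exact ⟨Filter.le_limsup_of_frequently_le h3.frequently hbd,
      Filter.limsup_le_of_le hbd'.isCoboundedUnder_le h2⟩

lemma min_family {X : Type*} [MetricSpace X] (φ : X → ℝ) (b : ℕ → X → ℝ) (T : Finset ℕ)
    (hφ : ∀ y, 0 ≤ φ y ∧ φ y ≤ 1) (hb : ∀ i ∈ T, ∀ y, 0 ≤ b i y)
    (hφL : ∃ K : ℝ, 0 ≤ K ∧ ∀ w y, |φ w - φ y| ≤ K * dist w y)
    (hbL : ∀ i ∈ T, ∃ K : ℝ, 0 ≤ K ∧ ∀ w y, |b i w - b i y| ≤ K * dist w y) :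
    ∃ β : X → ℝ, (∃ K : ℝ, 0 ≤ K ∧ ∀ w y, |β w - β y| ≤ K * dist w y) ∧
      (∀ y, 0 ≤ β y ∧ β y ≤ φ y) ∧ (∀ i ∈ T, ∀ y, β y ≤ b i y) ∧
      (∀ y, φ y = 1 → (∀ i ∈ T, b i y = 1) → β y = 1) ∧
      (∀ y c, (∀ᶠ w in nhds y, |φ w - φ y| ≤ c * dist w y) →
        (∀ i ∈ T, ∀ᶠ w in nhds y, |b i w - b i y| ≤ c * dist w y) →
        ∀ᶠ w in nhds y, |β w - β y| ≤ c * dist w y) := by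
  induction T using Finset.induction_on with
  | empty => exact ⟨φ, hφL, fun y => ⟨(hφ y).1, le_rfl⟩, by simp, by simp, fun y c h _ => h⟩
  | insert a T ha ih =>
    obtain ⟨β, ⟨K, hK, hβK⟩, h1, h2, h3, h4⟩ := ih (fun i hi => hb i (Finset.mem_insert_of_mem hi))
      (fun i hi => hbL i (Finset.mem_insert_of_mem hi))
    obtain ⟨K', hK', hbK⟩ := hbL a (Finset.mem_insert_self _ _)
    refine ⟨fun y => min (β y) (b a y), ⟨max K K', le_max_of_le_left hK, fun w y => ?_⟩,
      fun y => ⟨le_min (h1 y).1 (hb a (Finset.mem_insert_self _ _) y),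
        (min_le_left _ _).trans (h1 y).2⟩, ?_, ?_, ?_⟩
    · refine (abs_min_sub_min_le_max _ _ _ _).trans (max_le ?_ ?_)
      · exact (hβK w y).trans (by gcongr; exact le_max_left _ _)
      · exact (hbK w y).trans (by gcongr; exact le_max_right _ _)
    · intro i hi y
      rcases Finset.mem_insert.1 hi with rfl | hi
      · exact min_le_right _ _
      · exact (min_le_left _ _).trans (h2 i hi y)
    · intro y hy hi
      show min (β y) (b a y) = 1
      rw [h3 y hy (fun i h => hi i (Finset.mem_insert_of_mem h)),
        hi a (Finset.mem_insert_self _ _), min_self]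
    · intro y c hc hi
      filter_upwards [h4 y c hc (fun i h => hi i (Finset.mem_insert_of_mem h)),
        hi a (Finset.mem_insert_self _ _)] with w hw1 hw2
      exact (abs_min_sub_min_le_max _ _ _ _).trans (max_le hw1 hw2)

lemma exists_radius (s : ℝ) (hs : 0 < s) (D : ENNReal) (r₀ : ℝ) (hr₀ : 0 < r₀)
    (hD : D ≤ ENNReal.ofReal (r₀ / 2)) (e : ENNReal) (he : e ≠ 0) :
    ∃ r : ℝ, 0 < r ∧ r ≤ r₀ ∧ D < ENNReal.ofReal r ∧ ENNReal.ofReal r ^ s ≤ D ^ s + e := by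
  have hDt : D ≠ ⊤ := ne_top_of_le_ne_top ENNReal.ofReal_ne_top hD
  have hDs : D ^ s ≠ ⊤ := ENNReal.rpow_ne_top_of_nonneg hs.le hDt
  have hcont : ContinuousAt (fun r : ℝ => ENNReal.ofReal r ^ s) D.toReal :=
    (ENNReal.continuous_rpow_const.comp ENNReal.continuous_ofReal).continuousAt
  have hlt : (fun r : ℝ => ENNReal.ofReal r ^ s) D.toReal < D ^ s + e := by
    simp only [ENNReal.ofReal_toReal hDt]
    exact ENNReal.lt_add_right hDs he
  have hev := hcont.eventually_lt_const hlt
  have hDr : D.toReal < r₀ := by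
    have := ENNReal.toReal_le_of_le_ofReal (by positivity) hD
    linarith
  have hev2 : ∀ᶠ r in nhds D.toReal, r < r₀ := eventually_lt_nhds hDr
  obtain ⟨r, ⟨h1, h2⟩, h3⟩ := (((hev.and hev2).filter_mono nhdsWithin_le_nhds).and
    (self_mem_nhdsWithin : Set.Ioi D.toReal ∈ nhdsWithin D.toReal (Set.Ioi D.toReal))).exists
  have hr : 0 < r := lt_of_le_of_lt ENNReal.toReal_nonneg h3
  exact ⟨r, hr, h2.le, (ENNReal.lt_ofReal_iff_toReal_lt hDt).2 h3, h1.le⟩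

lemma cover_lemma {X : Type*} [MetricSpace X] [MeasurableSpace X] [BorelSpace X]
    (x : X) (s : ℝ) (hs : 0 < s) (K : Set X) (hK : IsCompact K) (h0 : μH[s] K = 0)
    (ε r₀ : ℝ) (hε : 0 < ε) (hr₀ : 0 < r₀) :
    ∃ (T : Finset ℕ) (z : ℕ → X) (r : ℕ → ℝ),
      (∀ i ∈ T, z i ∈ K ∧ 0 < r i ∧ r i ≤ r₀) ∧ (K ⊆ ⋃ i ∈ T, ball (z i) (r i)) ∧
      ∑ i ∈ T, r i ^ s ≤ ε := by
  rw [Measure.hausdorffMeasure_apply] at h0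
  have hε2 : (0 : ENNReal) < ENNReal.ofReal (ε / 2) := by simpa using hε
  have hr2 : (0 : ENNReal) < ENNReal.ofReal (r₀ / 2) := by simpa using hr₀
  have h1 := (le_iSup₂ (f := fun (r : ENNReal) (_ : 0 < r) => 
    ⨅ (t : ℕ → Set X) (_ : K ⊆ ⋃ n, t n) (_ : ∀ n, ediam (t n) ≤ r),
      ∑' n, ⨆ _ : (t n).Nonempty, ediam (t n) ^ s) (ENNReal.ofReal (r₀ / 2)) hr2)
  rw [h0] at h1
  have h1 := lt_of_le_of_lt h1 hε2
  simp only [iInf_lt_iff] at h1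
  obtain ⟨t, hKt, hdt, hsum⟩ := h1
  obtain ⟨e, he, hesum⟩ := ENNReal.exists_pos_sum_of_countable' hε2.ne' ℕ
  have key : ∀ n, ∃ (z : X) (r : ℝ), (t n ∩ K).Nonempty →
      z ∈ K ∧ 0 < r ∧ r ≤ r₀ ∧ t n ⊆ ball z r ∧ 
      ENNReal.ofReal (r ^ s) ≤ (⨆ _ : (t n).Nonempty, ediam (t n) ^ s) + e n := by
    intro n
    by_cases hn : (t n ∩ K).Nonempty
    · obtain ⟨z, hzt, hzK⟩ := hn
      obtain ⟨r, hr, hrr, hDr, hrs⟩ := exists_radius s hs _ r₀ hr₀ (hdt n) (e n) (he n).ne'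
      refine ⟨z, r, fun _ => ⟨hzK, hr, hrr, fun y hy => ?_, ?_⟩⟩
      · rw [mem_ball, ← edist_lt_ofReal]
        exact (edist_le_ediam_of_mem hy hzt).trans_lt hDr
      · rw [ciSup_pos ⟨z, hzt⟩, ← ENNReal.ofReal_rpow_of_pos hr]
        exact hrs
    · exact ⟨x, 0, fun h => absurd h hn⟩
  choose z r hzr using key
  obtain ⟨b', hb'sub, hb'fin, hcov⟩ := hK.elim_finite_subcover_image
    (b := {n | (t n ∩ K).Nonempty}) (c := fun n => ball (z n) (r n)) (fun _ _ => isOpen_ball)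
    (by
      intro y hy
      obtain ⟨n, hn⟩ := Set.mem_iUnion.1 (hKt hy)
      have hne : (t n ∩ K).Nonempty := ⟨y, hn, hy⟩
      exact Set.mem_biUnion hne ((hzr n hne).2.2.2.1 hn))
  have hmem : ∀ i ∈ hb'fin.toFinset, (t i ∩ K).Nonempty := fun i hi =>
    hb'sub (hb'fin.mem_toFinset.1 hi)
  refine ⟨hb'fin.toFinset, z, r, fun i hi => ?_, ?_, ?_⟩
  · have := hzr i (hmem i hi)
    exact ⟨this.1, this.2.1, this.2.2.1⟩
  · simpa using hcov
  · rw [← ENNReal.ofReal_le_ofReal_iff hε.le, ENNReal.ofReal_sum_of_nonneg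
      (fun i hi => Real.rpow_nonneg (hzr i (hmem i hi)).2.1.le _)]
    calc _ ≤ ∑ i ∈ hb'fin.toFinset, ((⨆ _ : (t i).Nonempty, ediam (t i) ^ s) + e i) :=
          Finset.sum_le_sum fun i hi => (hzr i (hmem i hi)).2.2.2.2
      _ ≤ ∑' i, ((⨆ _ : (t i).Nonempty, ediam (t i) ^ s) + e i) := ENNReal.sum_le_tsum _
      _ = _ := ENNReal.tsum_add
      _ ≤ ENNReal.ofReal (ε / 2) + ENNReal.ofReal (ε / 2) := add_le_add hsum.le hesum.le
      _ = ENNReal.ofReal ε := by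
        rw [← ENNReal.ofReal_add (by positivity) (by positivity), add_halves]

/-- Existence of a cut-off function with small weighted Dirichlet energy, supported away from a
closed set `Z` of vanishing `(m−2)`-dimensional Hausdorff measure. -/
theorem cutoff_small_energy {X : Type*} [MetricSpace X] [ProperSpace X]
    [MeasurableSpace X] [BorelSpace X] (μ : Measure X)
    (m C₀ : ℝ) (hm : 2 < m) (hC₀ : 0 < C₀)
    (hvol : ∀ (y : X) (r : ℝ), 0 < r → r ≤ 1 →
      μ (Metric.ball y r) ≤ ENNReal.ofReal (C₀ * r ^ m))
    (Z : Set X) (hZclosed : IsClosed Z) (hZ : μH[m - 2] Z = 0)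
    (f : X → ℝ) (hf_meas : Measurable f)
    (hf0 : ∀ x, 0 ≤ f x) (hf1 : ∀ x, f x ≤ 1)
    (hfint : ∫⁻ x, ENNReal.ofReal (f x) ∂μ ≤ 1)
    (x : X) (η δ : ℝ) (hη : 0 < η) (hδ : 0 < δ) :
    ∃ (δ₁ : ℝ) (β : X → ℝ), 0 < δ₁ ∧ δ₁ ≤ δ ∧
      (∃ K : ℝ≥0, LipschitzWith K β) ∧
      (∀ y, 0 ≤ β y ∧ β y ≤ 1) ∧
      (∀ y, y ∉ Metric.ball x (1 / δ₁) \ {p | Metric.infDist p Z ≤ δ₁} → β y = 0) ∧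
      (∀ y ∈ Metric.ball x (1 / δ) \ {p | Metric.infDist p Z ≤ δ}, β y = 1) ∧
      ∫⁻ y, ENNReal.ofReal (f y * (pointwiseLip β y) ^ 2) ∂μ ≤ ENNReal.ofReal η := by
  rcases Z.eq_empty_or_nonempty with rfl | hZne
  · refine ⟨δ, fun _ => 0, hδ, le_rfl, ⟨0, LipschitzWith.const 0⟩, by simp, by simp, ?_, ?_⟩
    · intro y hy
      exact absurd hδ.le (by simpa using hy.2)
    · have : ∀ y, pointwiseLip (fun _ : X => (0 : ℝ)) y = 0 := fun y => by
        have := pointwiseLip_bound (fun _ : X => (0 : ℝ)) y 0 le_rfl (by simp)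
        exact le_antisymm this.2 this.1
      simp [this]
  obtain ⟨L, hL, hLη⟩ : ∃ L : ℝ, 0 < L ∧ (1 / L) ^ 2 = η / 2 := by
    refine ⟨1 / Real.sqrt (η / 2), by positivity, ?_⟩
    rw [one_div_one_div, Real.sq_sqrt (by positivity)]
  set R : ℝ := 1 / δ with hR
  have hRpos : 0 < R := by positivity
  set K : Set X := Z ∩ closedBall x (R + L + 1) with hKdef
  have hKc : IsCompact K := (isCompact_closedBall x _).inter_left hZclosed
  have hK0 : μH[m - 2] K = 0 := measure_mono_null Set.inter_subset_left hZ
  set ε : ℝ := η / 2 / (C₀ * 3 ^ m) with hε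
  have h3m : (0 : ℝ) < 3 ^ m := by positivity
  obtain ⟨T, z, r, hT, hcov, hsum⟩ := cover_lemma x (m - 2) (by linarith) K hKc hK0 ε
    (min (1 / 3) (δ / 2)) (by positivity) (by positivity)
  set φ : X → ℝ := fun y => max 0 (min 1 ((R + L - dist y x) / L)) with hφ
  set b : ℕ → X → ℝ := fun i y => max 0 (min 1 (dist y (z i) / r i - 1)) with hb
  have hφL : ∀ w y, |φ w - φ y| ≤ 1 / L * dist w y := by
    intro w y
    refine (clamp_lip _ _).trans ?_
    rw [← _root_.sub_div, abs_div, abs_of_pos hL, div_eq_inv_mul, one_div]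
    gcongr
    rw [show R + L - dist w x - (R + L - dist y x) = dist y x - dist w x by ring, dist_comm w y]
    exact abs_dist_sub_le y w x
  have hbL : ∀ i ∈ T, ∀ w y, |b i w - b i y| ≤ 1 / r i * dist w y := by
    intro i hi w y
    have hri := (hT i hi).2.1
    refine (clamp_lip _ _).trans ?_
    rw [sub_sub_sub_cancel_right, ← _root_.sub_div, abs_div, abs_of_pos hri, div_eq_inv_mul, one_div]
    gcongr
    exact abs_dist_sub_le w y (z i)
  obtain ⟨β, ⟨M, hM, hβM⟩, hβ1, hβb, hβone, hβloc⟩ := min_family φ b T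
    (fun y => ⟨le_max_left _ _, max_le zero_le_one (min_le_left _ _)⟩)
    (fun i hi y => le_max_left _ _) ⟨1 / L, by positivity, hφL⟩
    (fun i hi => ⟨1 / r i, by have := (hT i hi).2.1; positivity, hbL i hi⟩)
  obtain ⟨δ', hδ', hthick⟩ := hKc.exists_cthickening_subset_open
    (isOpen_biUnion fun i (_ : i ∈ T) => (isOpen_ball : IsOpen (ball (z i) (r i)))) hcov
  set δ₁ : ℝ := min (min δ 1) (min (1 / (R + L)) δ') with hδ₁
  have hδ₁pos : 0 < δ₁ := by positivity
  have e1 : δ₁ ≤ δ := (min_le_left _ _).trans (min_le_left _ _)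
  have e2 : δ₁ ≤ 1 := (min_le_left _ _).trans (min_le_right _ _)
  have e3 : δ₁ ≤ 1 / (R + L) := (min_le_right _ _).trans (min_le_left _ _)
  have e4 : δ₁ ≤ δ' := (min_le_right _ _).trans (min_le_right _ _)
  have hfar : ∀ y, R + L ≤ dist y x → β y = 0 := by
    intro y hy
    refine le_antisymm ((hβ1 y).2.trans ?_) (hβ1 y).1
    refine max_le le_rfl ((min_le_right _ _).trans ?_)
    exact div_nonpos_of_nonpos_of_nonneg (by linarith) hL.le
  refine ⟨δ₁, β, hδ₁pos, e1, ⟨⟨M, hM⟩, LipschitzWith.of_dist_le_mul fun w y => hβM w y⟩,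
    fun y => ⟨(hβ1 y).1, (hβ1 y).2.trans (max_le zero_le_one (min_le_left _ _))⟩, ?_, ?_, ?_⟩
  · intro y hy
    by_cases hyx : R + L ≤ dist y x
    · exact hfar y hyx
    push Not at hyx
    have hyball : y ∈ ball x (1 / δ₁) := by
      rw [mem_ball]
      refine hyx.trans_le ?_
      rwa [le_div_iff₀ hδ₁pos, mul_comm, ← le_div_iff₀ (by positivity)]
    have hyd : infDist y Z ≤ δ₁ := by
      by_contra hcon
      exact hy ⟨hyball, hcon⟩
    obtain ⟨p, hpZ, hp⟩ := hZclosed.exists_infDist_eq_dist hZne y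
    have hpK : p ∈ K := by
      refine ⟨hpZ, ?_⟩
      rw [mem_closedBall]
      have := dist_triangle p y x
      rw [dist_comm p y] at this
      linarith
    have hyU := hthick (mem_cthickening_of_dist_le y p δ' K hpK (by linarith))
    obtain ⟨i, hi, hyi⟩ := Set.mem_iUnion₂.1 hyU
    refine le_antisymm ((hβb i hi y).trans ?_) (hβ1 y).1
    refine max_le le_rfl ((min_le_right _ _).trans ?_)
    rw [sub_nonpos, div_le_one (hT i hi).2.1]
    exact (mem_ball.1 hyi).le
  · rintro y ⟨hy, hyZ⟩
    refine hβone y ?_ ?_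
    · have : 1 ≤ (R + L - dist y x) / L := by
        rw [le_div_iff₀ hL]
        have := mem_ball.1 hy
        linarith
      simp [hφ, min_eq_left this]
    · intro i hi
      obtain ⟨hzi, hri, hri'⟩ := hT i hi
      have h1 : infDist y Z ≤ dist y (z i) := infDist_le_dist_of_mem hzi.1
      have h2 : r i ≤ δ / 2 := hri'.trans (min_le_right _ _)
      have h3 : δ < infDist y Z := by simpa using hyZ
      have : 1 ≤ dist y (z i) / r i - 1 := by
        rw [le_sub_iff_add_le, le_div_iff₀ hri]
        linarith
      simp [hb, min_eq_left this]
  · have hlip : ∀ y, pointwiseLip β y ^ 2 ≤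
        η / 2 + ∑ i ∈ T, (ball (z i) (3 * r i)).indicator (fun _ => (1 / r i) ^ 2) y := by
      intro y
      set S : ℝ := η / 2 + ∑ i ∈ T, (ball (z i) (3 * r i)).indicator (fun _ => (1 / r i) ^ 2) y
        with hS
      have hnn : ∀ i ∈ T, 0 ≤ (ball (z i) (3 * r i)).indicator (fun _ => (1 / r i) ^ 2) y :=
        fun i hi => Set.indicator_nonneg (fun _ _ => by positivity) y
      have hS0 : 0 ≤ S := add_nonneg (by positivity) (Finset.sum_nonneg hnn)
      have := pointwiseLip_bound β y (Real.sqrt S) (Real.sqrt_nonneg _) (hβloc y _ ?_ ?_)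
      · calc _ ≤ Real.sqrt S ^ 2 := pow_le_pow_left₀ this.1 this.2 2
          _ = S := Real.sq_sqrt hS0
      · refine Filter.Eventually.of_forall fun w => (hφL w y).trans ?_
        gcongr
        refine Real.le_sqrt_of_sq_le ?_
        rw [hLη]
        have := Finset.sum_nonneg hnn
        linarith
      · intro i hi
        have hri := (hT i hi).2.1
        by_cases hyi : y ∈ ball (z i) (3 * r i)
        · refine Filter.Eventually.of_forall fun w => (hbL i hi w y).trans ?_
          gcongr
          refine Real.le_sqrt_of_sq_le ?_
          have := Finset.single_le_sum hnn hi
          rw [Set.indicator_of_mem hyi] at this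
          linarith
        · have hone : ∀ w, 2 * r i < dist w (z i) → b i w = 1 := by
            intro w hw
            have : 1 ≤ dist w (z i) / r i - 1 := by
              rw [le_sub_iff_add_le, le_div_iff₀ hri]
              linarith
            simp [hb, min_eq_left this]
          have hy2 : 2 * r i < dist y (z i) := by
            rw [mem_ball, not_lt] at hyi
            linarith
          have : ∀ᶠ w in nhds y, 2 * r i < dist w (z i) :=
            (continuous_id.dist continuous_const).continuousAt.eventually_const_lt hy2
          filter_upwards [this] with w hw
          rw [hone w hw, hone y hy2]
          simp only [sub_self, abs_zero]
          positivity
    have hpt : ∀ y, ENNReal.ofReal (f y * pointwiseLip β y ^ 2) ≤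
        ENNReal.ofReal (η / 2) * ENNReal.ofReal (f y) + ∑ i ∈ T,
          (ball (z i) (3 * r i)).indicator (fun _ => ENNReal.ofReal ((1 / r i) ^ 2)) y := by
      intro y
      have hnn : ∀ i ∈ T, 0 ≤ (ball (z i) (3 * r i)).indicator (fun _ => (1 / r i) ^ 2) y :=
        fun i hi => Set.indicator_nonneg (fun _ _ => by positivity) y
      have h1 : f y * pointwiseLip β y ^ 2 ≤ η / 2 * f y +
          ∑ i ∈ T, (ball (z i) (3 * r i)).indicator (fun _ => (1 / r i) ^ 2) y := by
        have := mul_le_mul_of_nonneg_left (hlip y) (hf0 y)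
        have h2 := mul_le_mul_of_nonneg_right (hf1 y) (Finset.sum_nonneg hnn)
        linarith
      refine (ENNReal.ofReal_le_ofReal h1).trans ?_
      rw [ENNReal.ofReal_add (mul_nonneg (by positivity) (hf0 y)) (Finset.sum_nonneg hnn),
        ENNReal.ofReal_mul (by positivity), ENNReal.ofReal_sum_of_nonneg hnn]
      gcongr with i hi
      by_cases hyi : y ∈ ball (z i) (3 * r i)
      · simp only [Set.indicator_of_mem hyi, le_refl]
      · simp only [Set.indicator_of_notMem hyi, ENNReal.ofReal_zero, le_refl]
    refine (lintegral_mono hpt).trans ?_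
    rw [lintegral_add_left (hf_meas.ennreal_ofReal.const_mul _),
      lintegral_const_mul _ hf_meas.ennreal_ofReal,
      lintegral_finsetSum _ (fun i _ => measurable_const.indicator measurableSet_ball)]
    have hterm : ∀ i ∈ T, ∫⁻ y, (ball (z i) (3 * r i)).indicator
        (fun _ => ENNReal.ofReal ((1 / r i) ^ 2)) y ∂μ ≤
        ENNReal.ofReal (C₀ * 3 ^ m * r i ^ (m - 2)) := by
      intro i hi
      obtain ⟨-, hri, hri'⟩ := hT i hi
      have hr3 : r i ≤ 1 / 3 := hri'.trans (min_le_left _ _)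
      rw [lintegral_indicator_const measurableSet_ball]
      calc _ ≤ ENNReal.ofReal ((1 / r i) ^ 2) * ENNReal.ofReal (C₀ * (3 * r i) ^ m) := by
            gcongr
            exact hvol _ _ (by positivity) (by linarith)
        _ = _ := by
            rw [← ENNReal.ofReal_mul (by positivity), Real.mul_rpow (by norm_num) hri.le,
              Real.rpow_sub hri, Real.rpow_two]
            congr 1
            field_simp
    have htot : ∑ i ∈ T, C₀ * 3 ^ m * r i ^ (m - 2) ≤ η / 2 := by
      rw [← Finset.mul_sum]
      calc _ ≤ C₀ * 3 ^ m * ε := by gcongr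
        _ = η / 2 := by rw [hε]; field_simp
    calc _ ≤ ENNReal.ofReal (η / 2) * 1 +
          ∑ i ∈ T, ENNReal.ofReal (C₀ * 3 ^ m * r i ^ (m - 2)) := by
          gcongr with i hi
          exact hterm i hi
      _ ≤ ENNReal.ofReal (η / 2) + ENNReal.ofReal (η / 2) := by
          rw [mul_one, ← ENNReal.ofReal_sum_of_nonneg (fun i hi => by
            have := (hT i hi).2.1
            positivity)]
          gcongr
      _ = ENNReal.ofReal η := by
          rw [← ENNReal.ofReal_add (by positivity) (by positivity), add_halves]
end

section
/- Let (X, d) be a nonempty connected metric space and μ a Borel measure on X with total mass μ(X) ≤ V < ∞. Suppose there is a constant v > 0 such that μ(B(x, 1)) ≥ v for every x ∈ X. Then the diameter of X is finite and satisfies diam(X, d) ≤ 3·V/v. -/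
open MeasureTheory

/-- If a connected metric space carries a Borel measure of total mass at most `V` whose unit
balls all have measure at least `v > 0`, then its diameter is finite and at most `3V/v`. -/
theorem diam_le_of_unit_ball_volume {X : Type*} [MetricSpace X] [Nonempty X] [ConnectedSpace X]
    [MeasurableSpace X] [BorelSpace X] (μ : Measure X)
    (V v : ℝ) (hv : 0 < v)
    (hμV : μ Set.univ ≤ ENNReal.ofReal V)
    (hball : ∀ x : X, ENNReal.ofReal v ≤ μ (Metric.ball x 1)) :
    EMetric.diam (Set.univ : Set X) ≤ ENNReal.ofReal (3 * V / v) := by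
  refine EMetric.diam_le fun x _ y _ => ?_
  rw [edist_dist]
  apply ENNReal.ofReal_le_ofReal
  set D := dist x y with hD
  have hD0 : 0 ≤ D := dist_nonneg
  set N : ℕ := ⌊D / 2⌋₊ + 1 with hN
  have hsurj : ∀ k : Fin N, ∃ p : X, dist x p = 2 * (k : ℕ) := by
    intro k
    have hk : ((k : ℕ) : ℝ) ≤ D / 2 := by
      have h1 : (k : ℕ) ≤ ⌊D / 2⌋₊ := by have := k.2; omega
      exact (Nat.cast_le.mpr h1).trans (Nat.floor_le (by positivity))
    have hc : Continuous fun p : X => dist x p := by fun_prop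
    have := intermediate_value_univ x y hc
    have hm : (2 * ((k : ℕ) : ℝ)) ∈ Set.Icc (dist x x) (dist x y) := by
      rw [dist_self]
      exact ⟨by positivity, by linarith⟩
    exact this hm
  choose p hp using hsurj
  have hdisj : Pairwise (Function.onFun Disjoint fun k => Metric.ball (p k) 1) := by
    intro j k hjk
    apply Metric.ball_disjoint_ball
    have h1 : |dist x (p j) - dist x (p k)| ≤ dist (p j) (p k) := by
      rw [dist_comm x, dist_comm x]
      exact abs_dist_sub_le _ _ _
    rw [hp, hp, ← mul_sub, abs_mul, abs_two] at h1
    have h2 : (1 : ℝ) ≤ |((j : ℕ) : ℝ) - ((k : ℕ) : ℝ)| := by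
      have hne : ((j : ℕ) : ℤ) - ((k : ℕ) : ℤ) ≠ 0 := by
        have : (j : ℕ) ≠ k := fun h => hjk (Fin.ext h)
        omega
      have := Int.one_le_abs hne
      exact_mod_cast this
    linarith
  have hsum : ENNReal.ofReal (N * v) ≤ ENNReal.ofReal V := by
    calc ENNReal.ofReal (N * v) = ∑ _k : Fin N, ENNReal.ofReal v := by
          rw [ENNReal.ofReal_mul (by positivity)]
          simp
      _ ≤ ∑ k : Fin N, μ (Metric.ball (p k) 1) := Finset.sum_le_sum fun k _ => hball _
      _ = μ (⋃ k, Metric.ball (p k) 1) := by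
          rw [measure_iUnion hdisj fun k => Metric.isOpen_ball.measurableSet, tsum_fintype]
      _ ≤ μ Set.univ := measure_mono (Set.subset_univ _)
      _ ≤ _ := hμV
  have hNpos : (0 : ℝ) < N := by rw [hN]; positivity
  have hNv : N * v ≤ V := by
    rcases ENNReal.ofReal_le_ofReal_iff'.mp hsum with h | h
    · exact h
    · nlinarith [mul_pos hNpos hv]
  have hlt : D / 2 < N := by
    rw [hN]; push_cast; exact Nat.lt_floor_add_one _
  rw [le_div_iff₀ hv]
  nlinarith [mul_pos hNpos hv]
end
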